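/- Let f : [a,b] → ℝ be bounded with a finite number of (weak) local maximum points, local minimum points, and discontinuity points, and with essential range ER(f) = [inf_{[a,b]} f, sup_{[a,b]} f]. Let {Λ_n = {λ_{1,n},…,λ_{d_n,n}}}_n be a sequence of finite multisets of real numbers with d_n → ∞, and assume that {Λ_n} ∼ f and that Λ_n ⊆ f([a,b]) for every n. Then for every n there exist an asymptotically uniform grid {x_{i,n}}_{i=1,…,d_n} in [a,b] and a permutation τ_n of {1,…,d_n} such that λ_{τ_n(i),n} = f(x_{i,n}) for all i = 1,…,d_n. -/

import Mathlib

open MeasureTheory Filter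

/-- Essential range of a real-valued function on a set. -/
def essRangeR (f : ℝ → ℝ) (s : Set ℝ) : Set ℝ :=
  {z : ℝ | ∀ ε > 0, 0 < volume {x ∈ s | |f x - z| < ε}}

/-! A grid close to the uniform one amounts to a matching of the nodes of the uniform grid with
the values `λ_j`, in which each node is matched to a value that `f` takes near it; Hall's marriage
theorem provides it. Cut `[a, b]` into `K` cells. A set of nodes meeting the set `T` of cells has
at most about `d |T| / K` elements. The cells equal or adjacent to a cell of `T` are either all
the cells, in which case every `λ_j` is available because `λ_j ∈ f([a, b])`, or they outnumber `T`
by at least one, and then at least about `d (|T| + 1) / K` of the `λ_j` are available, the extra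
cell absorbing all errors once `d` is large. This last count is a portmanteau argument: it needs
open sets of values, and `f` is an open map away from its discontinuities and local extrema by the
intermediate value theorem. -/

open scoped Finset Topology ProbabilityTheory

section ExceptionalPoints

variable {X Y : Type*} [TopologicalSpace X] [TopologicalSpace Y] {f : X → Y} {s W : Set X}

/-- The points of `s` at which the restriction of `f` to `s` is discontinuous or has a weak local
extremum; on open subsets of `s` avoiding them, a real-valued `f` is an open map. -/
def exceptionalPoints [Preorder Y] (f : X → Y) (s : Set X) : Set X :=
  {x ∈ s | IsLocalExtrOn f s x ∨ ¬ ContinuousWithinAt f s x}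

lemma finite_exceptionalPoints [Preorder Y] (hmax : {x ∈ s | IsLocalMaxOn f s x}.Finite)
    (hmin : {x ∈ s | IsLocalMinOn f s x}.Finite)
    (hdisc : {x ∈ s | ¬ ContinuousWithinAt f s x}.Finite) : (exceptionalPoints f s).Finite :=
  ((hmax.union hmin).union hdisc).subset fun _ ⟨hxs, hx⟩ => by
    rcases hx with (hx | hx) | hx
    exacts [.inl (.inr ⟨hxs, hx⟩), .inl (.inl ⟨hxs, hx⟩), .inr ⟨hxs, hx⟩]

lemma isOpen_image_of_forall_not_isLocalExtr [LocallyConnectedSpace X] [LinearOrder Y]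
    [OrderTopology Y] (hW : IsOpen W) (hf : ContinuousOn f W)
    (hextr : ∀ x ∈ W, ¬ IsLocalExtr f x) : IsOpen (f '' W) := by
  rw [isOpen_iff_mem_nhds]
  rintro _ ⟨x, hx, rfl⟩
  obtain ⟨V, hVW, hV, hxV, hVconn⟩ :=
    locallyConnectedSpace_iff_subsets_isOpen_isConnected.1 ‹_› x W (hW.mem_nhds hx)
  obtain ⟨hmin, hmax⟩ := not_or.1 (hextr x hx)
  obtain ⟨u, hu, huV⟩ := ((not_eventually.1 hmin).and_eventually (hV.mem_nhds hxV)).exists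
  obtain ⟨v, hv, hvV⟩ := ((not_eventually.1 hmax).and_eventually (hV.mem_nhds hxV)).exists
  have hIcc : Set.Icc (f u) (f v) ⊆ f '' V :=
    (hVconn.isPreconnected.image f (hf.mono hVW)).Icc_subset ⟨u, huV, rfl⟩ ⟨v, hvV, rfl⟩
  exact mem_of_superset (Icc_mem_nhds (not_le.1 hu) (not_le.1 hv))
    (hIcc.trans (Set.image_mono hVW))

lemma continuousOn_of_disjoint_exceptionalPoints [Preorder Y] (hWs : W ⊆ s)
    (hW : Disjoint W (exceptionalPoints f s)) : ContinuousOn f W := fun x hx => by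
  have hcont : ContinuousWithinAt f s x :=
    not_not.1 fun hdisc => Set.disjoint_left.1 hW hx ⟨hWs hx, Or.inr hdisc⟩
  exact hcont.mono hWs

lemma isOpen_image_of_disjoint_exceptionalPoints [LocallyConnectedSpace X] [LinearOrder Y]
    [OrderTopology Y] (hWo : IsOpen W) (hWs : W ⊆ s)
    (hW : Disjoint W (exceptionalPoints f s)) : IsOpen (f '' W) :=
  isOpen_image_of_forall_not_isLocalExtr hWo (continuousOn_of_disjoint_exceptionalPoints hWs hW)
    fun _ hx hextr => Set.disjoint_left.1 hW hx ⟨hWs hx, Or.inl (hextr.on s)⟩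

lemma aemeasurable_restrict_of_measure_closure_exceptionalPoints [Preorder Y] [MeasurableSpace X]
    [OpensMeasurableSpace X] [MeasurableSpace Y] [BorelSpace Y] {μ : Measure X}
    (hs : MeasurableSet s) (hnull : μ (closure (exceptionalPoints f s)) = 0) :
    AEMeasurable f (μ.restrict s) := by
  have hcont : ContinuousOn f (s \ closure (exceptionalPoints f s)) :=
    continuousOn_of_disjoint_exceptionalPoints Set.sdiff_subset
      (Set.disjoint_sdiff_left.mono_right subset_closure)
  rw [← Measure.restrict_congr_set (sdiff_null_ae_eq_self hnull)]
  exact hcont.aemeasurable (hs.diff isClosed_closure.measurableSet)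

end ExceptionalPoints

section AsymptoticDistribution

variable {ι : Type*} {l : Filter ι} {d : ι → ℕ}

open Classical in
lemma eventually_lt_card_div_of_isOpen {E : Type*} [TopologicalSpace E] [T2Space E]
    [LocallyCompactSpace E] [MeasurableSpace E] [BorelSpace E] {ν : Measure E} [IsFiniteMeasure ν]
    [ν.Regular] {lam : (n : ι) → Fin (d n) → E}
    (hlam : ∀ F : E → ℝ, Continuous F → HasCompactSupport F →
      Tendsto (fun n => (∑ i, F (lam n i)) / d n) l (𝓝 (∫ z, F z ∂ν)))
    {U : Set E} (hU : IsOpen U) {r : ℝ} (hr : r < ν.real U) :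
    ∀ᶠ n in l, r < (#{i | lam n i ∈ U} : ℝ) / d n := by
  obtain ⟨C, hCU, hC, hrC⟩ : ∃ C ⊆ U, IsCompact C ∧ r < ν.real C := by
    obtain ⟨C, hCU, hC, hlt⟩ := hU.measurableSet.exists_isCompact_lt_add (measure_ne_top ν U)
      (ENNReal.ofReal_pos.2 (sub_pos.2 hr)).ne'
    refine ⟨C, hCU, hC, ?_⟩
    have hlt' := ENNReal.toReal_strict_mono (by finiteness) hlt
    rw [ENNReal.toReal_add (by finiteness) (by finiteness),
      ENNReal.toReal_ofReal (sub_pos.2 hr).le] at hlt'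
    simp only [Measure.real] at hlt' ⊢
    linarith
  obtain ⟨F, hF1, hF0, hFc, hF01⟩ := exists_continuous_one_zero_of_isCompact hC
    hU.isClosed_compl (Set.disjoint_compl_right_iff_subset.2 hCU)
  have hint : ν.real C ≤ ∫ z, F z ∂ν := by
    rw [← integral_indicator_one hC.measurableSet]
    refine integral_mono ((integrable_const 1).indicator hC.measurableSet)
      (F.continuous.integrable_of_hasCompactSupport hFc) fun z => ?_
    exact Set.indicator_apply_le' (fun hz => (hF1 hz).ge) fun _ => (hF01 z).1
  filter_upwards [(hlam F F.continuous hFc).eventually_const_lt (hrC.trans_le hint)] with n hn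
  refine hn.trans_le ?_
  have hF_le : ∀ i, F (lam n i) ≤ if lam n i ∈ U then 1 else 0 := fun i => by
    split_ifs with hi
    exacts [(hF01 _).2, (hF0 hi).le]
  gcongr
  simpa only [Finset.sum_boole] using Finset.sum_le_sum fun i (_ : i ∈ Finset.univ) => hF_le i

/-- The relation `{Λ_n} ∼ f` for a function `f` on `[a, b]`, where `Λ_n` is the multiset of the
values of `lam n` and `n` tends to infinity along `l`. -/
def HasAsymptoticDistribution (l : Filter ι) (lam : (n : ι) → Fin (d n) → ℝ) (a b : ℝ)
    (f : ℝ → ℝ) : Prop :=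
  ∀ F : ℂ → ℂ, Continuous F → HasCompactSupport F →
    Tendsto (fun n => (∑ i : Fin (d n), F ((lam n i : ℝ) : ℂ)) / ((d n : ℕ) : ℂ)) l
      (𝓝 ((∫ x in a..b, F ((f x : ℝ) : ℂ)) / ((b - a : ℝ) : ℂ)))

variable {lam : (n : ι) → Fin (d n) → ℝ} {a b : ℝ} {f : ℝ → ℝ}

lemma cond_uIoc_real_of_subset {S : Set ℝ} (hS : S ⊆ Set.uIoc a b) :
    (volume[|Set.uIoc a b]).real S = volume.real S / |b - a| := by
  rw [measureReal_def, ProbabilityTheory.cond_apply measurableSet_uIoc, Set.inter_eq_right.2 hS,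
    Real.volume_uIoc, ENNReal.toReal_mul, ENNReal.toReal_inv,
    ENNReal.toReal_ofReal (abs_nonneg _), measureReal_def, div_eq_inv_mul]

lemma HasAsymptoticDistribution.tendsto_interval_average
    (hlam : HasAsymptoticDistribution l lam a b f) {F : ℂ → ℝ} (hF : Continuous F)
    (hFc : HasCompactSupport F) :
    Tendsto (fun n => (∑ i, F (lam n i)) / d n) l (𝓝 (⨍ x in a..b, F (f x))) := by
  have hre := (Complex.continuous_re.tendsto _).comp
    (hlam (fun z => (F z : ℂ)) (by fun_prop) (hFc.comp_left Complex.ofReal_zero))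
  rw [intervalIntegral.integral_ofReal, ← Complex.ofReal_div, Complex.ofReal_re,
    ← interval_average_eq_div] at hre
  refine hre.congr fun n => ?_
  simp only [Function.comp_apply]
  norm_cast

open Classical in
lemma HasAsymptoticDistribution.eventually_lt_card_image_div
    (hlam : HasAsymptoticDistribution l lam a b f) (hab : a < b)
    (hnull : volume (closure (exceptionalPoints f (Set.Icc a b))) = 0)
    {W : Set ℝ} (hW : IsOpen W) (hWab : W ⊆ Set.Icc a b) {r : ℝ}
    (hr : r < volume.real W / (b - a)) :
    ∀ᶠ n in l, r < (#{j | lam n j ∈ f '' W} : ℝ) / d n := by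
  set W' := W \ closure (exceptionalPoints f (Set.Icc a b))
  set U : Set ℂ := Complex.re ⁻¹' (f '' W')
  have hU : IsOpen U := Complex.continuous_re.isOpen_preimage _ <|
    isOpen_image_of_disjoint_exceptionalPoints (hW.sdiff isClosed_closure)
      (Set.sdiff_subset.trans hWab) (Set.disjoint_sdiff_left.mono_right subset_closure)
  have hmeas : AEMeasurable (fun x => (f x : ℂ)) (volume[|Set.uIoc a b]) :=
    Complex.measurable_ofReal.comp_aemeasurable <|
      ((aemeasurable_restrict_of_measure_closure_exceptionalPoints measurableSet_Icc
        hnull).mono_set (Set.uIoc_of_le hab.le ▸ Set.Ioc_subset_Icc_self)).smul_measure _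
  set ν := (volume[|Set.uIoc a b]).map fun x => (f x : ℂ)
  have hν : ∀ F : ℂ → ℝ, Continuous F → HasCompactSupport F →
      Tendsto (fun n => (∑ i, F (lam n i)) / d n) l (𝓝 (∫ z, F z ∂ν)) := fun F hF hFc => by
    rw [integral_map hmeas hF.aestronglyMeasurable, ProbabilityTheory.cond, ← setAverage_eq']
    exact hlam.tendsto_interval_average hF hFc
  have hνU : volume.real W / (b - a) ≤ ν.real U := by
    have hW'ab : W' ⊆ Set.uIoc a b := by
      rw [Set.uIoc_of_le hab.le]
      refine Set.sdiff_subset.trans <| .trans ?_ Set.Ioo_subset_Ioc_self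
      rw [← interior_Icc]
      exact hW.subset_interior_iff.2 hWab
    have hsub : W' ⊆ (fun x => (f x : ℂ)) ⁻¹' U := fun x hx => ⟨x, hx, rfl⟩
    calc volume.real W / (b - a)
        = (volume[|Set.uIoc a b]).real W' := by
          rw [cond_uIoc_real_of_subset hW'ab, abs_of_pos (sub_pos.2 hab),
            measureReal_def volume W', measure_sdiff_null hnull, measureReal_def]
      _ ≤ (volume[|Set.uIoc a b]).real ((fun x => (f x : ℂ)) ⁻¹' U) := measureReal_mono hsub
      _ = ν.real U := (map_measureReal_apply_of_aemeasurable hmeas hU.measurableSet).symm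
  filter_upwards [eventually_lt_card_div_of_isOpen hν hU (hr.trans_le hνU)] with n hn
  refine hn.trans_le ?_
  gcongr with j
  rintro ⟨x, hx, hxj⟩
  exact ⟨x, hx.1, hxj⟩

end AsymptoticDistribution

section Matching

variable {I J V : Type*}

open Classical in
/-- The closed neighbourhood `N[T]` of a set `T` of vertices: the vertices equal or adjacent to a
vertex of `T`. -/
noncomputable def closedNeighborFinset [Fintype V] (G : SimpleGraph V) (T : Finset V) : Finset V :=
  {v | ∃ u ∈ T, u = v ∨ G.Adj u v}

variable [Fintype V] {G : SimpleGraph V}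

lemma mem_closedNeighborFinset {T : Finset V} {v : V} :
    v ∈ closedNeighborFinset G T ↔ ∃ u ∈ T, u = v ∨ G.Adj u v := by
  simp [closedNeighborFinset]

lemma card_lt_card_closedNeighborFinset (hG : G.Preconnected) {T : Finset V} (hT : T.Nonempty)
    (hT' : closedNeighborFinset G T ≠ Finset.univ) : #T < #(closedNeighborFinset G T) := by
  have hsub : T ⊆ closedNeighborFinset G T := fun v hv =>
    mem_closedNeighborFinset.2 ⟨v, hv, Or.inl rfl⟩
  obtain ⟨u, hu⟩ := hT
  obtain ⟨w, hw⟩ := not_forall.1 (mt Finset.eq_univ_iff_forall.2 hT')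
  obtain ⟨walk⟩ := hG u w
  obtain ⟨e, -, he, he'⟩ := walk.exists_boundary_dart T hu fun hwT => hw (hsub hwT)
  exact Finset.card_lt_card <| (Finset.ssubset_iff_of_subset hsub).2
    ⟨e.snd, mem_closedNeighborFinset.2 ⟨e.fst, he, Or.inr e.adj⟩, he'⟩

lemma exists_injective_mem_closedNeighborFinset [DecidableEq V] [Fintype I] [Fintype J]
    (hG : G.Preconnected) {c : I → V} {avail : J → V → Prop} [∀ j v, Decidable (avail j v)] {M : ℕ}
    (hIJ : Fintype.card I ≤ Fintype.card J) (havail : ∀ j, ∃ v, avail j v)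
    (hfiber : ∀ v, #{i | c i = v} ≤ M)
    (hcount : ∀ Q : Finset V, M * #Q ≤ #{j | ∃ v ∈ Q, avail j v} + M) :
    ∃ τ : I → J, Function.Injective τ ∧
      ∀ i, ∃ v ∈ closedNeighborFinset G {c i}, avail (τ i) v := by
  refine (Fintype.all_card_le_filter_rel_iff_exists_injective fun i j =>
    ∃ v ∈ closedNeighborFinset G {c i}, avail j v).1 fun S => ?_
  rcases S.eq_empty_or_nonempty with rfl | hS
  · simp
  set T := S.image c
  set N := closedNeighborFinset G T with hN
  have hsub : ({j | ∃ v ∈ N, avail j v} : Finset J) ⊆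
      ({j | ∃ i ∈ S, ∃ v ∈ closedNeighborFinset G {c i}, avail j v} : Finset J) := by
    intro j
    simp only [Finset.mem_filter_univ, hN, mem_closedNeighborFinset, T, Finset.mem_image]
    grind
  refine le_trans ?_ (Finset.card_le_card hsub)
  by_cases hNuniv : N = Finset.univ
  · calc #S ≤ Fintype.card J := (Finset.card_le_univ S).trans hIJ
      _ = #{j | ∃ v ∈ N, avail j v} := by simp [hNuniv, havail]
  · have hST : #S ≤ M * #T := Finset.card_le_mul_card_image S M fun v _ =>
      (Finset.card_le_card <| Finset.filter_subset_filter _ S.subset_univ).trans (hfiber v)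
    have hTN : M * (#T + 1) ≤ M * #N :=
      Nat.mul_le_mul_left M (card_lt_card_closedNeighborFinset hG (hS.image c) hNuniv)
    linarith [hcount N]

end Matching

section Cells

/-- The `k`-th endpoint of the division of `[a, b]` into `K` intervals of equal length. -/
noncomputable def breakpoint (a b : ℝ) (K k : ℕ) : ℝ :=
  a + k * ((b - a) / K)

/-- The `k`-th of `K` closed intervals of equal length dividing `[a, b]`, counted from `0`. -/
def cell (a b : ℝ) (K k : ℕ) : Set ℝ :=
  Set.Icc (breakpoint a b K k) (breakpoint a b K (k + 1))

/-- The uniform grid of `d` interior points of `[a, b]`, the comparison grid in the definition of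
asymptotic uniformity. Its index starts at `0`, not at `1`. -/
noncomputable def uniformGrid (a b : ℝ) (d : ℕ) (i : Fin d) : ℝ :=
  a + ((i : ℕ) + 1) * (b - a) / (d + 1)

variable {a b : ℝ} {K : ℕ}

lemma monotone_breakpoint (hab : a ≤ b) (K : ℕ) : Monotone (breakpoint a b K) := fun k m hkm => by
  have := sub_nonneg.2 hab
  unfold breakpoint
  gcongr

lemma breakpoint_zero (a b : ℝ) (K : ℕ) : breakpoint a b K 0 = a := by
  simp [breakpoint]

lemma breakpoint_self (a b : ℝ) (hK : K ≠ 0) : breakpoint a b K K = b := by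
  unfold breakpoint
  field_simp
  ring

lemma breakpoint_succ_sub (a b : ℝ) (K k : ℕ) :
    breakpoint a b K (k + 1) - breakpoint a b K k = (b - a) / K := by
  unfold breakpoint
  push_cast
  ring

lemma cell_subset_Icc (hab : a ≤ b) (k : Fin K) : cell a b K k ⊆ Set.Icc a b := by
  have hmono := monotone_breakpoint hab K
  refine Set.Icc_subset_Icc ?_ ?_
  · simpa only [breakpoint_zero] using hmono (Nat.zero_le k)
  · simpa only [breakpoint_self a b k.pos.ne'] using hmono k.is_lt

lemma exists_mem_cell (hK : K ≠ 0) {x : ℝ} (hx : x ∈ Set.Icc a b) :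
    ∃ k : Fin K, x ∈ cell a b K k := by
  rcases hx.1.eq_or_lt with rfl | hax
  · exact ⟨⟨0, Nat.pos_of_ne_zero hK⟩, (breakpoint_zero a b K).le,
      (breakpoint_zero a b K).symm.trans_le (monotone_breakpoint hx.2 K zero_le_one)⟩
  · have hxK : x ∈ Set.Ioc (breakpoint a b K 0) (breakpoint a b K K) := by
      rw [breakpoint_zero, breakpoint_self a b hK]
      exact ⟨hax, hx.2⟩
    obtain ⟨k, hk, hxk⟩ := Set.mem_iUnion₂.1 (Ioc_subset_biUnion_Ioc K _ hxK)
    exact ⟨⟨k, Finset.mem_range.1 hk⟩, Set.Ioc_subset_Icc_self hxk⟩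

lemma dist_le_of_mem_cell (hab : a ≤ b) {k m : Fin K} {x y : ℝ}
    (hkm : m ∈ closedNeighborFinset (SimpleGraph.pathGraph K) {k}) (hx : x ∈ cell a b K k)
    (hy : y ∈ cell a b K m) : dist x y ≤ 2 * ((b - a) / K) := by
  have hL : 0 ≤ (b - a) / K := div_nonneg (sub_nonneg.2 hab) K.cast_nonneg
  obtain ⟨hkm, hmk⟩ : (k : ℝ) ≤ m + 1 ∧ (m : ℝ) ≤ k + 1 := by
    simp only [mem_closedNeighborFinset, Finset.mem_singleton, exists_eq_left,
      SimpleGraph.pathGraph_adj] at hkm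
    norm_cast
    omega
  obtain ⟨hx₁, hx₂⟩ := hx
  obtain ⟨hy₁, hy₂⟩ := hy
  simp only [breakpoint, Nat.cast_add, Nat.cast_one] at hx₁ hx₂ hy₁ hy₂
  rw [Real.dist_eq, abs_le]
  constructor <;> linarith [mul_le_mul_of_nonneg_right hkm hL, mul_le_mul_of_nonneg_right hmk hL]

lemma volume_real_biUnion_interior_cell (hab : a ≤ b) (Q : Finset (Fin K)) :
    volume.real (⋃ k ∈ Q, interior (cell a b K k)) = #Q * ((b - a) / K) := by
  have hdisj : (Q : Set (Fin K)).PairwiseDisjoint fun k => interior (cell a b K k) := by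
    intro k _ m _ hkm
    simp only [Function.onFun, cell, interior_Icc]
    exact (monotone_breakpoint hab K).pairwise_disjoint_on_Ioo_succ (Fin.val_ne_of_ne hkm)
  have hvol : ∀ k : Fin K, volume.real (interior (cell a b K k)) = (b - a) / K := fun k => by
    rw [cell, interior_Icc, Real.volume_real_Ioo_of_le (monotone_breakpoint hab K k.1.le_succ),
      breakpoint_succ_sub]
  rw [measureReal_biUnion_finset hdisj (fun _ _ => measurableSet_interior)
    fun _ _ => by rw [cell, interior_Icc]; exact measure_Ioo_lt_top.ne]
  simp only [hvol, Finset.sum_const, nsmul_eq_mul]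

lemma card_le_div_add_one_of_forall_mul_mem_Icc {S : Finset ℕ} {K u m : ℕ} (hK : 0 < K)
    (hS : ∀ i ∈ S, i * K ∈ Set.Icc u (u + m)) : #S ≤ m / K + 1 := by
  rcases S.eq_empty_or_nonempty with rfl | hne
  · simp
  have hmin := (hS _ (S.min'_mem hne)).1
  have hmax := (hS _ (S.max'_mem hne)).2
  have hdiff : S.max' hne - S.min' hne ≤ m / K := by
    rw [Nat.le_div_iff_mul_le hK, Nat.sub_mul]
    omega
  have hcard : #S ≤ #(Finset.Icc (S.min' hne) (S.max' hne)) :=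
    Finset.card_le_card fun i hi => Finset.mem_Icc.2 ⟨S.min'_le i hi, S.le_max' i hi⟩
  rw [Nat.card_Icc] at hcard
  omega

lemma uniformGrid_mem_Icc (hab : a ≤ b) {d : ℕ} (i : Fin d) :
    uniformGrid a b d i ∈ Set.Icc a b := by
  have hi : ((i : ℕ) + 1 : ℝ) / (d + 1) ∈ Set.Icc (0 : ℝ) 1 :=
    ⟨by positivity, div_le_one_of_le₀ (by gcongr; exact i.is_lt.le) (by positivity)⟩
  rw [uniformGrid, mul_div_right_comm]
  constructor <;> nlinarith [hi.1, hi.2]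

open Classical in
lemma card_uniformGrid_mem_cell_le (hab : a < b) (hK : 0 < K) (d k : ℕ) :
    #{i | uniformGrid a b d i ∈ cell a b K k} ≤ (d + 1) / K + 1 := by
  set S : Finset (Fin d) := {i | uniformGrid a b d i ∈ cell a b K k}
  have hinj : Function.Injective fun i : Fin d => (i : ℕ) + 1 :=
    (add_left_injective 1).comp Fin.val_injective
  rw [← Finset.card_image_of_injective S hinj]
  refine card_le_div_add_one_of_forall_mul_mem_Icc (u := k * (d + 1)) hK fun m hm => ?_
  obtain ⟨i, hi, rfl⟩ := Finset.mem_image.1 hm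
  obtain ⟨hki, hik⟩ := (Finset.mem_filter_univ i).1 hi
  have hba := sub_pos.2 hab
  simp only [uniformGrid, breakpoint, add_le_add_iff_left, mul_div_assoc', mul_comm _ (b - a)]
    at hki hik
  rw [div_le_div_iff₀ (by positivity) (by positivity), mul_assoc, mul_assoc,
    mul_le_mul_iff_right₀ hba] at hki hik
  norm_cast at hki hik
  exact ⟨hki, hik.trans_eq (by ring)⟩

end Cells

section SamplingGrids

-- `N` may fall short of `q * d / K` by half a cell, and since `2 * K ^ 2 ≤ d` the rounding errors
-- in the node counts `(d + 1) / K + 1` of `q - 1` cells use up at most the other half.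
lemma mul_le_add_of_lt_div {K d q N : ℕ} (hqK : q ≤ K) (hd : 2 * K ^ 2 ≤ d)
    (h : ((q : ℝ) - 1 / 2) / K < N / d) :
    ((d + 1) / K + 1) * q ≤ N + ((d + 1) / K + 1) := by
  obtain _ | q := q
  · simp
  have hK : 0 < K := by omega
  have hd0 : 0 < d := by nlinarith
  have hM : ((d + 1) / K + 1) * K ≤ d + 1 + K := by
    linarith [Nat.div_mul_le_self (d + 1) K]
  have hN : d * (2 * q + 1) < 2 * (N * K) := by
    rw [div_lt_div_iff₀ (by positivity) (by positivity)] at h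
    push_cast at h
    rify
    linarith
  have hq : 2 * ((K + 1) * q) ≤ d := by nlinarith
  have hMq : ((d + 1) / K + 1) * q ≤ N := by
    refine Nat.le_of_mul_le_mul_right ?_ hK
    nlinarith [Nat.mul_le_mul_right q hM]
  linarith

variable {ι : Type*} {l : Filter ι} {d : ι → ℕ} {lam : (n : ι) → Fin (d n) → ℝ} {a b : ℝ}
  {f : ℝ → ℝ}

open Classical in
lemma HasAsymptoticDistribution.eventually_mul_card_le
    (hlam : HasAsymptoticDistribution l lam a b f) (hab : a < b)
    (hnull : volume (closure (exceptionalPoints f (Set.Icc a b))) = 0) (hd : Tendsto d l atTop)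
    {K : ℕ} (hK : 0 < K) :
    ∀ᶠ n in l, ∀ Q : Finset (Fin K), ((d n + 1) / K + 1) * #Q ≤
      #{j | ∃ k ∈ Q, lam n j ∈ f '' cell a b K k} + ((d n + 1) / K + 1) := by
  rw [eventually_all]
  intro Q
  set W := ⋃ k ∈ Q, interior (cell a b K k)
  have hWab : W ⊆ Set.Icc a b := Set.iUnion₂_subset fun k _ =>
    interior_subset.trans (cell_subset_Icc hab.le k)
  have hr : ((#Q : ℝ) - 1 / 2) / K < volume.real W / (b - a) := by
    have hba := sub_pos.2 hab
    rw [volume_real_biUnion_interior_cell hab.le, mul_div_assoc', div_right_comm,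
      mul_div_cancel_right₀ _ hba.ne']
    gcongr
    linarith
  filter_upwards [hlam.eventually_lt_card_image_div hab hnull
    (isOpen_biUnion fun _ _ => isOpen_interior) hWab hr, hd.eventually_ge_atTop (2 * K ^ 2)]
    with n hn hdn
  refine (mul_le_add_of_lt_div ((Finset.card_le_univ Q).trans_eq (Fintype.card_fin K)) hdn
    hn).trans ?_
  gcongr with j
  rintro ⟨x, hxW, hxj⟩
  obtain ⟨k, hk, hxk⟩ := Set.mem_iUnion₂.1 hxW
  exact ⟨k, hk, x, interior_subset hxk, hxj⟩

/-- The grids of points of `s` whose images under `f` are, up to order, the values `v`. -/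
def samplingGrids {I X Y : Type*} (f : X → Y) (s : Set X) (v : I → Y) : Set (I → X) :=
  {x | (∀ i, x i ∈ s) ∧ ∃ τ : Equiv.Perm I, ∀ i, v (τ i) = f (x i)}

lemma samplingGrids_nonempty {I X Y : Type*} {f : X → Y} {s : Set X} {v : I → Y}
    (hv : ∀ i, v i ∈ f '' s) :
    (samplingGrids f s v).Nonempty := by
  choose x hxs hxv using hv
  exact ⟨x, hxs, 1, fun i => (hxv i).symm⟩

open Classical in
lemma exists_mem_samplingGrids_dist_le (hab : a < b) {D K : ℕ} (hK : 0 < K) {v : Fin D → ℝ}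
    (hv : ∀ i, v i ∈ f '' Set.Icc a b)
    (hcount : ∀ Q : Finset (Fin K), ((D + 1) / K + 1) * #Q ≤
      #{j | ∃ k ∈ Q, v j ∈ f '' cell a b K k} + ((D + 1) / K + 1)) :
    ∃ x ∈ samplingGrids f (Set.Icc a b) v, dist (uniformGrid a b D) x ≤ 2 * ((b - a) / K) := by
  choose c hc using fun i : Fin D => exists_mem_cell hK.ne' (uniformGrid_mem_Icc hab.le i)
  have hfiber : ∀ k, #{i | c i = k} ≤ (D + 1) / K + 1 := fun k => by
    refine (Finset.card_le_card ?_).trans (card_uniformGrid_mem_cell_le hab hK D k)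
    intro i hi
    rw [Finset.mem_filter_univ] at hi ⊢
    exact hi ▸ hc i
  have havail : ∀ j, ∃ k : Fin K, v j ∈ f '' cell a b K k := fun j => by
    obtain ⟨y, hy, hyj⟩ := hv j
    obtain ⟨k, hk⟩ := exists_mem_cell hK.ne' hy
    exact ⟨k, y, hk, hyj⟩
  obtain ⟨τ, hτ, hmatch⟩ := exists_injective_mem_closedNeighborFinset
    (SimpleGraph.pathGraph_preconnected K) le_rfl havail hfiber
    fun Q => by convert hcount Q
  choose k hk x hx hxv using hmatch
  have hL : 0 ≤ 2 * ((b - a) / K) := mul_nonneg zero_le_two <|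
    div_nonneg (sub_nonneg.2 hab.le) K.cast_nonneg
  exact ⟨x, ⟨fun i => cell_subset_Icc hab.le _ (hx i),
    .ofBijective τ (Finite.injective_iff_bijective.1 hτ), fun i => (hxv i).symm⟩,
    (dist_pi_le_iff hL).2 fun i => dist_le_of_mem_cell hab.le (hk i) (hc i) (hx i)⟩

lemma HasAsymptoticDistribution.tendsto_infDist_samplingGrids
    (hlam : HasAsymptoticDistribution l lam a b f) (hab : a < b)
    (hnull : volume (closure (exceptionalPoints f (Set.Icc a b))) = 0) (hd : Tendsto d l atTop)
    (hloc : ∀ n i, lam n i ∈ f '' Set.Icc a b) :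
    Tendsto (fun n => Metric.infDist (uniformGrid a b (d n))
      (samplingGrids f (Set.Icc a b) (lam n))) l (𝓝 0) := by
  have hmesh : Tendsto (fun K : ℕ => 2 * ((b - a) / K)) atTop (𝓝 0) := by
    simpa using (tendsto_const_div_atTop_nhds_zero_nat (b - a)).const_mul 2
  refine tendsto_order.2 ⟨fun r hr => .of_forall fun n => hr.trans_le Metric.infDist_nonneg,
    fun ε hε => ?_⟩
  obtain ⟨K, hKε, hK⟩ := ((hmesh.eventually_lt_const hε).and (eventually_gt_atTop 0)).exists
  filter_upwards [hlam.eventually_mul_card_le hab hnull hd hK] with n hn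
  obtain ⟨x, hx, hdist⟩ := exists_mem_samplingGrids_dist_le hab hK (hloc n) hn
  exact ((Metric.infDist_le_dist_of_mem hx).trans hdist).trans_lt hKε

lemma exists_forall_mem_tendsto_dist_zero {Y : ι → Type*} [∀ n, PseudoMetricSpace (Y n)]
    {S : ∀ n, Set (Y n)} {c : ∀ n, Y n} {δ : ι → ℝ} (hS : ∀ n, (S n).Nonempty)
    (hδ : ∀ n, 0 < δ n) (hδ0 : Tendsto δ l (𝓝 0))
    (hc : Tendsto (fun n => Metric.infDist (c n) (S n)) l (𝓝 0)) :
    ∃ y : ∀ n, Y n, (∀ n, y n ∈ S n) ∧ Tendsto (fun n => dist (c n) (y n)) l (𝓝 0) := by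
  choose y hyS hy using fun n =>
    (Metric.infDist_lt_iff (hS n)).1 (lt_add_of_pos_right (Metric.infDist (c n) (S n)) (hδ n))
  exact ⟨y, hyS, squeeze_zero (fun _ => dist_nonneg) (fun n => (hy n).le)
    (by simpa only [add_zero] using hc.add hδ0)⟩

end SamplingGrids

theorem stmt17_general {ι : Type*} {l : Filter ι} (a b : ℝ) (hab : a < b) (f : ℝ → ℝ)
    (hnull : volume (closure (exceptionalPoints f (Set.Icc a b))) = 0)
    (d : ι → ℕ) (hd : Tendsto d l atTop) (lam : (n : ι) → Fin (d n) → ℝ)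
    (hlam : HasAsymptoticDistribution l lam a b f)
    (hloc : ∀ n i, lam n i ∈ f '' Set.Icc a b) :
    ∃ (x : (n : ι) → Fin (d n) → ℝ) (τ : (n : ι) → Equiv.Perm (Fin (d n))),
      (∀ n i, x n i ∈ Set.Icc a b) ∧
      (∀ ε > (0 : ℝ), ∀ᶠ n in l, ∀ i : Fin (d n),
        |x n i - (a + ((i : ℕ) + 1) * (b - a) / (d n + 1))| < ε) ∧
      (∀ n i, lam n (τ n i) = f (x n i)) := by
  obtain ⟨x, hx, hlim⟩ := exists_forall_mem_tendsto_dist_zero (δ := fun n => 1 / ((d n : ℝ) + 1))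
    (fun n => samplingGrids_nonempty (hloc n)) (fun n => Nat.one_div_pos_of_nat)
    (tendsto_one_div_add_atTop_nhds_zero_nat.comp hd)
    (hlam.tendsto_infDist_samplingGrids hab hnull hd hloc)
  choose hxab τ hτ using hx
  refine ⟨x, τ, hxab, fun ε hε => ?_, hτ⟩
  filter_upwards [hlim.eventually_lt_const hε] with n hn i
  rw [← Real.dist_eq, dist_comm]
  exact (dist_le_pi_dist (uniformGrid a b (d n)) (x n) i).trans_lt hn

/-- Let `f : [a,b] → ℝ` be bounded with finitely many (weak) local max
points, local min points and discontinuity points, and essential range `[inf f, sup f]`.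
Let `{Λ_n}` be multisets of reals with `{Λ_n} ∼ f` and `Λ_n ⊆ f([a,b])`.  Then for every
`n` there exist an asymptotically uniform grid `{x_{i,n}}` in `[a,b]` and a permutation
`τ_n` with `λ_{τ_n(i),n} = f(x_{i,n})` for all `i`. -/
theorem stmt17
    (a b : ℝ) (hab : a < b) (f : ℝ → ℝ)
    (hf_bdd : ∃ C : ℝ, ∀ x ∈ Set.Icc a b, |f x| ≤ C)
    (hmax_fin : {x ∈ Set.Icc a b | IsLocalMaxOn f (Set.Icc a b) x}.Finite)
    (hmin_fin : {x ∈ Set.Icc a b | IsLocalMinOn f (Set.Icc a b) x}.Finite)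
    (hdisc_fin : {x ∈ Set.Icc a b | ¬ ContinuousWithinAt f (Set.Icc a b) x}.Finite)
    (hER : essRangeR f (Set.Icc a b)
      = Set.Icc (sInf (f '' Set.Icc a b)) (sSup (f '' Set.Icc a b)))
    (d : ℕ → ℕ) (hd : Tendsto d atTop atTop)
    (lam : (n : ℕ) → Fin (d n) → ℝ)
    (hdist : ∀ F : ℂ → ℂ, Continuous F → HasCompactSupport F →
      Tendsto (fun n : ℕ => (∑ i : Fin (d n), F ((lam n i : ℝ) : ℂ)) / ((d n : ℕ) : ℂ)) atTop
        (nhds ((∫ x in a..b, F ((f x : ℝ) : ℂ)) / ((b - a : ℝ) : ℂ))))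
    (hloc : ∀ n : ℕ, ∀ i : Fin (d n), lam n i ∈ f '' Set.Icc a b) :
    ∃ (x : (n : ℕ) → Fin (d n) → ℝ) (τ : (n : ℕ) → Equiv.Perm (Fin (d n))),
      (∀ n : ℕ, ∀ i : Fin (d n), x n i ∈ Set.Icc a b) ∧
      (∀ ε > (0:ℝ), ∃ N : ℕ, ∀ n ≥ N, ∀ i : Fin (d n),
        |x n i - (a + ((i : ℕ) + 1) * (b - a) / (d n + 1))| < ε) ∧
      (∀ n : ℕ, ∀ i : Fin (d n), lam n (τ n i) = f (x n i)) := by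
  have hexc := finite_exceptionalPoints hmax_fin hmin_fin hdisc_fin
  have hnull : volume (closure (exceptionalPoints f (Set.Icc a b))) = 0 := by
    rw [hexc.isClosed.closure_eq, hexc.measure_zero]
  obtain ⟨x, τ, hx, hau, hτ⟩ := stmt17_general a b hab f hnull d hd lam hdist hloc
  exact ⟨x, τ, hx, fun ε hε => eventually_atTop.1 (hau ε hε), hτ⟩
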